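/- arXiv:math/0010190 — 6 statements merged into one kernel-verified Lean document; each statement's English description precedes it below -/
import Mathlib

section
/- Suppose in addition that S is invertible. Then there exists a skewsymmetric n×n real matrix A satisfying the BD equations if and only if τ preserves S and τ has no cycles (i.e., (Γ₁, Γ₂, τ) is a Belavin–Drinfeld triple). -/
/-!
Let `P` be the matrix of the partial map `τ` and `D` the diagonal projection onto `Γ₁`, so that
`D² = D` and `D P = P`. For skewsymmetric `A` the BD equations read `(D - P) A = -(D + P) S`, and
`τ` preserves `S` iff `P S Pᵀ = D S Dᵀ`.

Given a solution, `(D - P) A (D - P)ᵀ = -(D + P) S (D - P)ᵀ` is skewsymmetric, while the right-hand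
side and its transpose add up to `2 (P S Pᵀ - D S Dᵀ)`; so `τ` preserves `S`. The indicator `v` of a
cycle satisfies `v D = v P = v`, so that `0 = v (D - P) A = -2 v S`, which contradicts the
invertibility of `S`.

Conversely, if there are no cycles then `P` is nilpotent and `1 - P` is invertible. Conjugating the
unknown to `B = (1 - P) A (1 - P)ᵀ`, the choice `B = S (D + P)ᵀ - (D + P) S` gives a solution.
-/

open Matrix

namespace BelavinDrinfeld

section MatrixEquation

variable {V R : Type*} [Fintype V] [CommRing R] {A S D P : Matrix V V R}

theorem mul_mul_transpose_eq_of_skew_solution (h2 : IsRegular (2 : R)) (hS : S.IsSymm)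
    (hA : Aᵀ = -A) (hBD : (D - P) * A = -((D + P) * S)) :
    P * S * Pᵀ = D * S * Dᵀ := by
  have hBD_transpose : A * (D - P)ᵀ = S * (D + P)ᵀ := by
    simpa only [transpose_mul, transpose_neg, hA, hS.eq, Matrix.neg_mul, Matrix.mul_neg, neg_inj]
      using congr_arg transpose hBD
  have h_sum : (D - P) * S * (D + P)ᵀ + (D + P) * S * (D - P)ᵀ = 0 := by
    rw [Matrix.mul_assoc (D - P), ← hBD_transpose, ← Matrix.mul_assoc, hBD, Matrix.neg_mul,
      neg_add_cancel]
  have h_two_smul : (2 : R) • (P * S * Pᵀ) = (2 : R) • (D * S * Dᵀ) := by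
    rw [two_smul, two_smul, eq_comm, ← sub_eq_zero, ← h_sum, transpose_add, transpose_sub]
    noncomm_ring
  ext i j
  exact h2.left (congr_fun₂ h_two_smul i j)

theorem eq_zero_of_vecMul_eq_of_solution (h2 : IsRegular (2 : R))
    (hS : Function.Injective S.vecMul) (hBD : (D - P) * A = -((D + P) * S))
    {v : V → R} (hvD : v ᵥ* D = v) (hvP : v ᵥ* P = v) : v = 0 := by
  have h_two_smul : (2 : R) • (v ᵥ* S) = 0 := by
    have h := congr_arg (v ᵥ* ·) hBD
    simpa only [← vecMul_vecMul, vecMul_neg, vecMul_sub, vecMul_add, hvD, hvP, sub_self,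
      zero_vecMul, ← two_smul R v, smul_vecMul, zero_eq_neg] using h
  have hvS : v ᵥ* S = 0 := by
    ext m
    exact h2.left (by simpa using congr_fun h_two_smul m)
  exact hS (hvS.trans (zero_vecMul S).symm)

theorem exists_skew_solution [DecidableEq V] (hS : S.IsSymm) (hDD : D * D = D) (hDP : D * P = P)
    (hP : IsUnit (1 - P)) (hPS : P * S * Pᵀ = D * S * Dᵀ) :
    ∃ A : Matrix V V R, Aᵀ = -A ∧ (D - P) * A = -((D + P) * S) := by
  obtain ⟨Q, hPQ⟩ := hP.exists_right_inv
  have hQP : (1 - P)ᵀ * Qᵀ = 1 := by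
    rw [← transpose_mul, mul_eq_one_comm.mp hPQ, transpose_one]
  set B := S * (D + P)ᵀ - (D + P) * S with hB
  have hB_skew : Bᵀ = -B := by
    simp only [hB, transpose_sub, transpose_mul, transpose_transpose, hS.eq, neg_sub]
  have hDB : D * B = -((D + P) * S * (1 - P)ᵀ) := by
    calc D * B = D * S * Dᵀ + D * S * Pᵀ - (D * D + D * P) * S := by
          rw [hB, transpose_add]; noncomm_ring
      _ = P * S * Pᵀ + D * S * Pᵀ - (D + P) * S := by rw [hDD, hDP, hPS]
      _ = -((D + P) * S * (1 - P)ᵀ) := by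
          rw [transpose_sub, transpose_one]; noncomm_ring
  refine ⟨Q * B * Qᵀ, ?_, ?_⟩
  · simp only [transpose_mul, transpose_transpose, hB_skew, Matrix.mul_assoc, Matrix.neg_mul,
      Matrix.mul_neg]
  · calc (D - P) * (Q * B * Qᵀ) = D * ((1 - P) * Q) * B * Qᵀ := by
          simp only [← Matrix.mul_assoc, Matrix.mul_sub, Matrix.mul_one, hDP]
      _ = -((D + P) * S * ((1 - P)ᵀ * Qᵀ)) := by
          rw [hPQ, Matrix.mul_one, hDB, Matrix.neg_mul, Matrix.mul_assoc _ _ Qᵀ]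
      _ = -((D + P) * S) := by rw [hQP, Matrix.mul_one]

end MatrixEquation

/-- The Belavin–Drinfeld equations for `A`, where the partial map is the restriction of `τ`
to `Γ`. -/
def SatisfiesBD {V R : Type*} [Add R] [Zero R] (S : Matrix V V R) (Γ : Set V) (τ : V → V)
    (A : Matrix V V R) : Prop :=
  ∀ i ∈ Γ, ∀ m, A i m + A m (τ i) + S i m + S (τ i) m = 0

/-- The partial map given by `τ` on `Γ` preserves the bilinear form with matrix `S`. -/
def Preserves {V R : Type*} (S : Matrix V V R) (Γ : Set V) (τ : V → V) : Prop :=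
  ∀ i ∈ Γ, ∀ j ∈ Γ, S (τ i) (τ j) = S i j

/-- The partial map given by `τ` on `Γ` has no cycles: no point returns to itself along iterates
that stay in the domain `Γ`. -/
def NoCycles {V : Type*} (Γ : Set V) (τ : V → V) : Prop :=
  ∀ i ∈ Γ, ∀ k : ℕ, 1 ≤ k → (∀ j < k, τ^[j] i ∈ Γ) → τ^[k] i ≠ i

theorem NoCycles.exists_iterate_notMem {V : Type*} [Finite V] {Γ : Set V} {τ : V → V}
    (h : NoCycles Γ τ) (i : V) : ∃ k, τ^[k] i ∉ Γ := by
  by_contra! h_mem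
  obtain ⟨a, b, h_eq, h_ne⟩ : ∃ a b, τ^[a] i = τ^[b] i ∧ a ≠ b := by
    simpa [Function.Injective] using not_injective_infinite_finite fun k => τ^[k] i
  wlog hab : a < b generalizing a b
  · exact this b a h_eq.symm h_ne.symm (by omega)
  refine h (τ^[a] i) (h_mem a) (b - a) (by omega) (fun j _ => ?_) ?_
  · rw [← Function.iterate_add_apply]
    exact h_mem _
  · rw [← Function.iterate_add_apply, Nat.sub_add_cancel hab.le, h_eq]

theorem sum_range_add_one_of_apply_eq_apply_zero {M : Type*} [AddCommMonoid M] {f : ℕ → M}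
    {p : ℕ} (hf : f p = f 0) :
    ∑ j ∈ Finset.range p, f (j + 1) = ∑ j ∈ Finset.range p, f j := by
  cases p with
  | zero => rfl
  | succ q => rw [Finset.sum_range_succ, hf, Finset.sum_range_succ']

section PartialMapMatrix

variable {V : Type*} [DecidableEq V] (R : Type*) [Semiring R]

/-- The matrix of the partial map given by `τ` on `Γ`: row `i` is the basis vector at `τ i` when
`i ∈ Γ`, and zero otherwise. In particular `partialMapMatrix R Γ id` is the coordinate projection
onto `Γ`. -/
noncomputable def partialMapMatrix (Γ : Set V) (τ : V → V) : Matrix V V R :=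
  Matrix.of (Γ.indicator fun i => Pi.single (τ i) 1)

variable {R} {Γ : Set V} {τ : V → V}

theorem partialMapMatrix_apply (i : V) :
    partialMapMatrix R Γ τ i = Γ.indicator (fun i => Pi.single (τ i) 1) i :=
  rfl

variable [Fintype V]

theorem single_vecMul_partialMapMatrix {i : V} (hi : i ∈ Γ) :
    Pi.single i 1 ᵥ* partialMapMatrix R Γ τ = Pi.single (τ i) 1 := by
  rw [single_one_vecMul, row, partialMapMatrix_apply, Set.indicator_of_mem hi]

theorem partialMapMatrix_mul_apply (M : Matrix V V R) (i : V) :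
    (partialMapMatrix R Γ τ * M) i = Γ.indicator (fun i => M (τ i)) i := by
  rw [mul_apply_eq_vecMul]
  by_cases hi : i ∈ Γ <;> simp [partialMapMatrix_apply, hi, row]

theorem mul_partialMapMatrix_transpose_apply (M : Matrix V V R) (i j : V) :
    (M * (partialMapMatrix R Γ τ)ᵀ) i j = Γ.indicator (fun j => M i (τ j)) j := by
  by_cases hj : j ∈ Γ <;> simp [mul_apply, partialMapMatrix_apply, hj, Pi.single_apply]

theorem partialMapMatrix_id_mul :
    partialMapMatrix R Γ id * partialMapMatrix R Γ τ = partialMapMatrix R Γ τ := by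
  ext i j
  rw [partialMapMatrix_mul_apply]
  by_cases hi : i ∈ Γ <;> simp [partialMapMatrix_apply, hi]

theorem preserves_iff_matrix {S : Matrix V V R} :
    Preserves S Γ τ ↔
      partialMapMatrix R Γ τ * S * (partialMapMatrix R Γ τ)ᵀ =
        partialMapMatrix R Γ id * S * (partialMapMatrix R Γ id)ᵀ := by
  simp only [← Matrix.ext_iff, mul_partialMapMatrix_transpose_apply, partialMapMatrix_mul_apply]
  refine forall_congr' fun i => ?_
  by_cases hi : i ∈ Γ
  · simp only [hi, true_imp_iff]
    refine forall_congr' fun j => ?_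
    by_cases hj : j ∈ Γ <;> simp [hi, hj]
  · simp [hi]

theorem partialMapMatrix_pow_apply_eq_zero {i : V} {j k : ℕ} (hjk : j < k)
    (hj : τ^[j] i ∉ Γ) : (partialMapMatrix R Γ τ ^ k) i = 0 := by
  induction k generalizing i j with
  | zero => omega
  | succ k ih =>
    rw [pow_succ', partialMapMatrix_mul_apply]
    by_cases hi : i ∈ Γ
    · cases j with
      | zero => exact absurd hi hj
      | succ j => rw [Set.indicator_of_mem hi, ih (Nat.lt_of_succ_lt_succ hjk) hj]
    · exact Set.indicator_of_notMem hi _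

theorem NoCycles.isNilpotent_partialMapMatrix (h : NoCycles Γ τ) :
    IsNilpotent (partialMapMatrix R Γ τ) := by
  choose exitTime h_exit using h.exists_iterate_notMem
  refine ⟨Finset.univ.sup exitTime + 1, ?_⟩
  ext i m
  have h_lt : exitTime i < Finset.univ.sup exitTime + 1 :=
    Nat.lt_succ_of_le (Finset.le_sup (Finset.mem_univ i))
  exact congr_fun (partialMapMatrix_pow_apply_eq_zero h_lt (h_exit i)) m

theorem exists_ne_zero_vecMul_partialMapMatrix_eq [Nontrivial R] {i : V} {k : ℕ} (hk : 1 ≤ k)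
    (h_mem : ∀ j < k, τ^[j] i ∈ Γ) (h_cycle : τ^[k] i = i) :
    ∃ v : V → R, v ≠ 0 ∧ v ᵥ* partialMapMatrix R Γ id = v ∧
      v ᵥ* partialMapMatrix R Γ τ = v := by
  set p := Function.minimalPeriod τ i with hp
  have h_periodic : Function.IsPeriodicPt τ k i := h_cycle
  have hp_pos : 0 < p := h_periodic.minimalPeriod_pos hk
  have hp_mem : ∀ j ∈ Finset.range p, τ^[j] i ∈ Γ := fun j hj =>
    h_mem j ((Finset.mem_range.mp hj).trans_le (h_periodic.minimalPeriod_le hk))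
  let e : ℕ → V → R := fun j => Pi.single (τ^[j] i) 1
  refine ⟨∑ j ∈ Finset.range p, e j, fun hv => ?_, ?_, ?_⟩
  · have h_apply : (∑ j ∈ Finset.range p, e j) i = 1 := by
      rw [Finset.sum_apply, Finset.sum_eq_single_of_mem 0 (Finset.mem_range.mpr hp_pos)]
      · simp [e]
      · intro j hj hj0
        exact Pi.single_eq_of_ne' (Function.not_isPeriodicPt_of_pos_of_lt_minimalPeriod hj0
          (Finset.mem_range.mp hj)) _
    exact one_ne_zero (h_apply.symm.trans (congr_fun hv i))
  · rw [sum_vecMul]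
    exact Finset.sum_congr rfl fun j hj => single_vecMul_partialMapMatrix (hp_mem j hj)
  · rw [sum_vecMul]
    calc ∑ j ∈ Finset.range p, e j ᵥ* partialMapMatrix R Γ τ
        = ∑ j ∈ Finset.range p, e (j + 1) := Finset.sum_congr rfl fun j hj => by
          simp only [e, single_vecMul_partialMapMatrix (hp_mem j hj),
            Function.iterate_succ_apply']
      _ = ∑ j ∈ Finset.range p, e j := by
          apply sum_range_add_one_of_apply_eq_apply_zero
          simp only [e, hp, Function.iterate_minimalPeriod, Function.iterate_zero_apply]

end PartialMapMatrix

theorem satisfiesBD_iff_matrix {V R : Type*} [Fintype V] [DecidableEq V] [CommRing R]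
    {S A : Matrix V V R} {Γ : Set V} {τ : V → V} (hA : Aᵀ = -A) :
    SatisfiesBD S Γ τ A ↔
      (partialMapMatrix R Γ id - partialMapMatrix R Γ τ) * A =
        -((partialMapMatrix R Γ id + partialMapMatrix R Γ τ) * S) := by
  rw [← Matrix.ext_iff]
  refine forall_congr' fun i => ?_
  by_cases hi : i ∈ Γ
  · simp only [hi, true_imp_iff, Matrix.sub_mul, Matrix.add_mul, Matrix.sub_apply,
      Matrix.neg_apply, Matrix.add_apply, partialMapMatrix_mul_apply, Set.indicator_of_mem, id]
    refine forall_congr' fun m => ?_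
    have h_skew : A m (τ i) = -A (τ i) m := congr_fun₂ hA (τ i) m
    exact ⟨fun h => by linear_combination h - h_skew, fun h => by linear_combination h + h_skew⟩
  · simp [hi, Matrix.sub_mul, Matrix.add_mul, partialMapMatrix_mul_apply]

end BelavinDrinfeld

open BelavinDrinfeld in
theorem stmt_0_general {V R : Type*} [Finite V] [CommRing R] [Nontrivial R]
    (h2 : IsRegular (2 : R)) {S : Matrix V V R} (hS_symm : S.IsSymm)
    (hS_indep : LinearIndependent R S.row) (Γ : Set V) (τ : V → V) :
    (∃ A : Matrix V V R, (∀ i j, A i j = -A j i) ∧ SatisfiesBD S Γ τ A) ↔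
      Preserves S Γ τ ∧ NoCycles Γ τ := by
  classical
  have := Fintype.ofFinite V
  constructor
  · rintro ⟨A, hA, hBD⟩
    have hA_skew : Aᵀ = -A := ext fun i j => hA j i
    rw [satisfiesBD_iff_matrix hA_skew] at hBD
    refine ⟨preserves_iff_matrix.mpr
      (mul_mul_transpose_eq_of_skew_solution h2 hS_symm hA_skew hBD), ?_⟩
    intro i _ k hk h_mem h_cycle
    obtain ⟨v, hv, hvD, hvP⟩ := exists_ne_zero_vecMul_partialMapMatrix_eq (R := R) hk h_mem h_cycle
    exact hv (eq_zero_of_vecMul_eq_of_solution h2 (vecMul_injective_iff.mpr hS_indep) hBD hvD hvP)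
  · rintro ⟨h_pres, h_cyc⟩
    obtain ⟨A, hA_skew, hBD⟩ := exists_skew_solution hS_symm partialMapMatrix_id_mul
      partialMapMatrix_id_mul h_cyc.isNilpotent_partialMapMatrix.isUnit_one_sub
      (preserves_iff_matrix.mp h_pres)
    exact ⟨A, fun i j => congr_fun₂ hA_skew j i, (satisfiesBD_iff_matrix hA_skew).mpr hBD⟩

/-- For `S` symmetric and invertible, a skewsymmetric real matrix `A`
satisfying the Belavin–Drinfeld equations exists if and only if `τ` preserves `S`
and `τ` has no cycles. -/
theorem stmt_0 (n : ℕ) (hn : 1 ≤ n)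
    (S : Matrix (Fin n) (Fin n) ℝ) (hSsymm : S.IsSymm) (hSinv : IsUnit S.det)
    (Γ₁ Γ₂ : Set (Fin n)) (τ : Fin n → Fin n) (hτ : Set.BijOn τ Γ₁ Γ₂) :
    (∃ A : Matrix (Fin n) (Fin n) ℝ,
        (∀ i j, A i j = - A j i) ∧
        (∀ i ∈ Γ₁, ∀ m, A i m + A m (τ i) + S i m + S (τ i) m = 0)) ↔
    ((∀ i ∈ Γ₁, ∀ j ∈ Γ₁, S (τ i) (τ j) = S i j) ∧
     (∀ i ∈ Γ₁, ∀ k : ℕ, 1 ≤ k → (∀ j < k, τ^[j] i ∈ Γ₁) → τ^[k] i ≠ i)) :=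
  stmt_0_general (IsRegular.of_ne_zero two_ne_zero) hSsymm
    (linearIndependent_rows_of_isUnit ((isUnit_iff_isUnit_det S).mpr hSinv)) Γ₁ τ
end

section
/- Let C be an invertible n×n real matrix and d₁,…,d_n positive reals such that the matrix S with entries S_{ij} = d_i C_{ij} is symmetric. Then there exists an n×n real matrix b such that the matrix A := Cᵀ(b − bᵀ)C satisfies the BD equations if and only if τ preserves S and τ has no cycles (i.e., (Γ₁, Γ₂, τ) is a Belavin–Drinfeld triple). -/
open Matrix

/-!
Put `M = A + S`. For `S` symmetric, the BD equations say that `M m (τ i) = -M i m`, and `A` is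
skew-symmetric iff `M + Mᵀ = S + Sᵀ`. Applying the equations twice gives
`M (τ i) (τ j) = M i j`, so `τ` preserves `S`; summing them over a cycle shows that the
corresponding rows of `M + Mᵀ` add up to zero, which nondegeneracy forbids. Conversely, in the
absence of cycles every orbit leaves `Γ₁`, and the equations express row and column `i` of `M`
through row and column `τ i`. So `M` can be built recursively from its entries with both indices
outside `Γ₁`, which are taken from `S`; invariance of `S` makes the recursion along rows
compatible with the one along columns.
-/

section PartialMap

variable {ι : Type*} {Γ : Set ι} {τ : ι → ι}

/-- The partial map `τ`, defined on `Γ`, has no cycles. It is encoded by a total function whose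
values outside `Γ` are never used. -/
def NoCycles (Γ : Set ι) (τ : ι → ι) : Prop :=
  ∀ i ∈ Γ, ∀ k : ℕ, 1 ≤ k → (∀ j < k, τ^[j] i ∈ Γ) → τ^[k] i ≠ i

lemma noCycles_of_forall_image_ne [DecidableEq ι]
    (h : ∀ c : Finset ι, c.Nonempty → ↑c ⊆ Γ → c.image τ ≠ c) : NoCycles Γ τ := by
  rintro i - k hk hmem hcycle
  obtain ⟨k, rfl⟩ := Nat.exists_eq_add_of_le' hk
  let orbit := (Finset.range (k + 1)).image fun j => τ^[j] i
  refine h orbit (by simp [orbit]) (by simpa [orbit, Set.subset_def] using hmem) ?_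
  calc orbit.image τ
      = (Finset.range (k + 1)).image fun j => τ^[j + 1] i := by
        simp only [orbit, Finset.image_image, Function.comp_def, Function.iterate_succ_apply']
    _ = insert i ((Finset.range k).image fun j => τ^[j + 1] i) := by
        rw [Finset.range_add_one, Finset.image_insert, hcycle]
    _ = orbit := by
        simp only [orbit, Finset.range_add_one', Finset.image_insert, Finset.map_eq_image,
          Finset.image_image]
        rfl

lemma exists_iterate_of_transGen {a b : ι}
    (h : Relation.TransGen (fun a b => b ∈ Γ ∧ τ b = a) a b) :
    ∃ k, 1 ≤ k ∧ (∀ j < k, τ^[j] b ∈ Γ) ∧ τ^[k] b = a := by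
  induction h with
  | single hb => exact ⟨1, le_rfl, by simpa using hb.1, hb.2⟩
  | tail _ hstep ih =>
    obtain ⟨k, -, hmem, hk⟩ := ih
    obtain ⟨hc, rfl⟩ := hstep
    refine ⟨k + 1, by simp, fun j hj => ?_, hk⟩
    cases j with
    | zero => exact hc
    | succ j => exact hmem j (by lia)

lemma NoCycles.wellFounded [Finite ι] (h : NoCycles Γ τ) :
    WellFounded fun a b => b ∈ Γ ∧ τ b = a := by
  let r : ι → ι → Prop := fun a b => b ∈ Γ ∧ τ b = a
  have : Std.Irrefl (Relation.TransGen r) := ⟨fun i hi => by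
    obtain ⟨k, hk, hmem, hcycle⟩ := exists_iterate_of_transGen hi
    exact h i (hmem 0 hk) k hk hmem hcycle⟩
  exact Subrelation.wf (r := Relation.TransGen r) (fun hab => Relation.TransGen.single hab)
    (Finite.wellFounded_of_trans_of_irrefl (Relation.TransGen r))

lemma NoCycles.induction [Finite ι] (h : NoCycles Γ τ) {p : ι → Prop}
    (notMem : ∀ i ∉ Γ, p i) (mem : ∀ i ∈ Γ, p (τ i) → p i) (i : ι) : p i :=
  h.wellFounded.induction i fun i ih => by
    by_cases hi : i ∈ Γ
    · exact mem i hi (ih _ ⟨hi, rfl⟩)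
    · exact notMem i hi

lemma NoCycles.exists_recursive [Finite ι] (h : NoCycles Γ τ) {X : Type*}
    (base : ι → X) (step : ι → X → X) :
    ∃ f : ι → X, (∀ i ∉ Γ, f i = base i) ∧ ∀ i ∈ Γ, f i = step i (f (τ i)) := by
  classical
  let body (i : ι) (rec : ∀ j, (i ∈ Γ ∧ τ i = j) → X) : X :=
    if hi : i ∈ Γ then step i (rec (τ i) ⟨hi, rfl⟩) else base i
  refine ⟨h.wellFounded.fix body, fun i hi => ?_, fun i hi => ?_⟩ <;>
    rw [WellFounded.fix_eq] <;> simp [body, hi]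

end PartialMap

section PreservesOn

variable {ι α R : Type*} {Γ : Set ι} {τ : ι → ι}

/-- The form with matrix `S` is invariant under the partial map `τ` defined on `Γ`: with
`NoCycles Γ τ`, one of the two conditions on a Belavin–Drinfeld triple. -/
def PreservesOn (Γ : Set ι) (τ : ι → ι) (S : Matrix ι ι α) : Prop :=
  ∀ i ∈ Γ, ∀ j ∈ Γ, S (τ i) (τ j) = S i j

lemma preservesOn_smul_iff [Monoid R] [MulAction R α] {u : R} (hu : IsUnit u)
    {S : Matrix ι ι α} : PreservesOn Γ τ (u • S) ↔ PreservesOn Γ τ S := by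
  simp only [PreservesOn, Matrix.smul_apply, hu.smul_left_cancel]

end PreservesOn

section TwistedSkew

variable {ι α : Type*} [AddCommGroup α] {Γ : Set ι} {τ : ι → ι} {M : Matrix ι ι α}

/-- Skew-symmetry of `M` twisted by the partial map `τ`, defined on `Γ`; for `τ = id` and
`Γ = univ` it is skew-symmetry. With `M = A + S` this restates the Belavin–Drinfeld equations. -/
def IsTwistedSkew (Γ : Set ι) (τ : ι → ι) (M : Matrix ι ι α) : Prop :=
  ∀ i ∈ Γ, ∀ m, M m (τ i) = -M i m

/-- The Belavin–Drinfeld equations for `A`, with respect to the form `S` and the partial map `τ`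
defined on `Γ`. -/
def BDEquations (Γ : Set ι) (τ : ι → ι) (S A : Matrix ι ι α) : Prop :=
  ∀ i ∈ Γ, ∀ m, A i m + A m (τ i) + S i m + S (τ i) m = 0

lemma bdEquations_iff_isTwistedSkew_add {S A : Matrix ι ι α} (hS : S.IsSymm) :
    BDEquations Γ τ S A ↔ IsTwistedSkew Γ τ (A + S) := by
  refine forall₂_congr fun i _ => forall_congr' fun m => ?_
  rw [← add_eq_zero_iff_eq_neg, Matrix.add_apply, Matrix.add_apply, hS.apply (τ i) m]
  abel_nf

lemma add_add_transpose_add_eq_iff {A S : Matrix ι ι α} :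
    A + S + (A + S)ᵀ = S + Sᵀ ↔ Aᵀ = -A := by
  rw [transpose_add, add_add_add_comm, add_eq_right, add_eq_zero_iff_eq_neg']

lemma IsTwistedSkew.preservesOn_add_transpose (hM : IsTwistedSkew Γ τ M) :
    PreservesOn Γ τ (M + Mᵀ) := by
  have apply_map_map : ∀ i ∈ Γ, ∀ j ∈ Γ, M (τ i) (τ j) = M i j := fun i hi j hj => by
    rw [hM j hj, hM i hi, neg_neg]
  intro i hi j hj
  simp only [Matrix.add_apply, transpose_apply, apply_map_map i hi j hj, apply_map_map j hj i hi]

lemma IsTwistedSkew.sum_row_eq_zero [DecidableEq ι] (hM : IsTwistedSkew Γ τ M) {c : Finset ι}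
    (hcΓ : ↑c ⊆ Γ) (hc : c.image τ = c) : ∑ i ∈ c, (M + Mᵀ).row i = 0 := by
  have hinj : Set.InjOn τ c := Finset.card_image_iff.mp (congrArg Finset.card hc)
  ext m
  have hcol : ∑ i ∈ c, M m i = -∑ i ∈ c, M i m :=
    calc ∑ i ∈ c, M m i = ∑ i ∈ c, M m (τ i) := by
          rw [← Finset.sum_image (f := M m) hinj, hc]
      _ = -∑ i ∈ c, M i m := by
          rw [← Finset.sum_neg_distrib]
          exact Finset.sum_congr rfl fun i hi => hM i (hcΓ hi) m
  simp [Finset.sum_apply, Finset.sum_add_distrib, hcol]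

lemma NoCycles.add_transpose_eq [Finite ι] (h : NoCycles Γ τ) {T : Matrix ι ι α}
    (hT : T.IsSymm) (hτ : PreservesOn Γ τ T) (hrow : ∀ i ∈ Γ, M i = M (τ i) - T (τ i))
    (hadd : ∀ i ∉ Γ, ∀ m, M i m + M m i = T i m) : M + Mᵀ = T := by
  replace hrow : ∀ i ∈ Γ, ∀ m, M i m = M (τ i) m - T (τ i) m := fun i hi => congrFun (hrow i hi)
  have hskew : ∀ i ∈ Γ, ∀ m, M (τ i) m + M m (τ i) = T (τ i) m → M i m = -M m (τ i) := by
    intro i hi m h_eq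
    rw [hrow i hi, ← h_eq]
    abel
  suffices h_eq : ∀ i m, M i m + M m i = T i m from ext h_eq
  refine h.induction hadd fun i hi ih => h.induction (fun m hm => ?_) fun m hm ihm => ?_
  · rw [add_comm, hadd m hm, hT.apply]
  · calc M i m + M m i = -M m (τ i) + -M i (τ m) := by
          rw [hskew i hi m (ih m), hskew m hm i (by rw [add_comm, ihm, hT.apply])]
      _ = T (τ m) (τ i) + T (τ i) (τ m) - (M (τ i) (τ m) + M (τ m) (τ i)) := by
          rw [hrow m hm, hrow i hi]
          abel
      _ = T i m := by rw [ih, add_sub_cancel_right, hτ m hm i hi, hT.apply]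

lemma NoCycles.exists_isTwistedSkew [Finite ι] (h : NoCycles Γ τ) (N : Matrix ι ι α)
    (hN : PreservesOn Γ τ (N + Nᵀ)) :
    ∃ M : Matrix ι ι α, M + Mᵀ = N + Nᵀ ∧ IsTwistedSkew Γ τ M := by
  have hT : (N + Nᵀ).IsSymm := isSymm_add_transpose_self N
  have hT_apply : ∀ i m, (N + Nᵀ) i m = N i m + N m i := fun _ _ => rfl
  generalize N + Nᵀ = T at hN hT hT_apply
  -- Given `M + Mᵀ = T`, twisted skew-symmetry reads `M i m = M i (τ m) + T i m` for `m ∈ Γ`, and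
  -- `M i m = M (τ i) m - T (τ i) m` for `i ∈ Γ`. The first recursion is solved by `F m i`.
  obtain ⟨F, hF_notMem, hF_mem⟩ := h.exists_recursive (fun m => N.col m) fun m x => x + T.col m
  obtain ⟨(M : Matrix ι ι α), hM_notMem, hM_mem⟩ :=
    h.exists_recursive (fun i m => F m i) fun i x => x - T (τ i)
  have hadd_notMem : ∀ i ∉ Γ, ∀ m, M i m + M m i = T i m := by
    intro i hi
    refine h.induction (fun m hm => ?_) fun m hm ih => ?_
    · simp only [hM_notMem i hi, hM_notMem m hm, hF_notMem i hi, hF_notMem m hm, col_apply,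
        hT_apply]
    · calc M i m + M m i = M i (τ m) + M (τ m) i + T i m - T (τ m) i := by
            simp only [hM_notMem i hi, hF_mem m hm, hM_mem m hm, Pi.add_apply, Pi.sub_apply,
              col_apply]
            abel
        _ = T i m := by rw [ih, hT.apply, add_sub_cancel_left]
  have hadd : M + Mᵀ = T := h.add_transpose_eq hT hN hM_mem hadd_notMem
  refine ⟨M, hadd, fun i hi m => ?_⟩
  rw [hM_mem i hi, ← hadd]
  simp

end TwistedSkew

section Nondegenerate

variable {ι R : Type*} [Finite ι] [CommRing R] {Γ : Set ι} {τ : ι → ι}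

lemma separatingLeft_smul {u : R} (hu : IsUnit u) {S : Matrix ι ι R} (hS : S.SeparatingLeft) :
    (u • S).SeparatingLeft := by
  cases nonempty_fintype ι
  rw [separatingLeft_iff_forall_vecMul_eq_zero] at hS ⊢
  intro v hv
  exact hS v (hu.smul_eq_zero.mp (by rwa [← vecMul_smul]))

lemma IsTwistedSkew.noCycles [Nontrivial R] {M : Matrix ι ι R} (hM : IsTwistedSkew Γ τ M)
    (hsep : (M + Mᵀ).SeparatingLeft) : NoCycles Γ τ := by
  classical
  cases nonempty_fintype ι
  refine noCycles_of_forall_image_ne fun c ⟨i, hi⟩ hcΓ hc => ?_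
  have hvecMul : (∑ j ∈ c, Pi.single j 1) ᵥ* (M + Mᵀ) = 0 := by
    simpa only [sum_vecMul, single_one_vecMul] using hM.sum_row_eq_zero hcΓ hc
  have hsum := hsep.eq_zero_of_vecMul_eq_zero hvecMul
  simpa [Finset.sum_apply, Pi.single_apply, hi] using congrFun hsum i

lemma exists_isTwistedSkew_iff [Nontrivial R] {N : Matrix ι ι R}
    (hN : (N + Nᵀ).SeparatingLeft) :
    (∃ M : Matrix ι ι R, M + Mᵀ = N + Nᵀ ∧ IsTwistedSkew Γ τ M) ↔
      PreservesOn Γ τ (N + Nᵀ) ∧ NoCycles Γ τ := by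
  constructor
  · rintro ⟨M, hadd, hM⟩
    rw [← hadd] at hN ⊢
    exact ⟨hM.preservesOn_add_transpose, hM.noCycles hN⟩
  · rintro ⟨hτ, hcycles⟩
    exact hcycles.exists_isTwistedSkew N hτ

end Nondegenerate

section SkewMatrix

variable {ι R : Type*} [Fintype ι] [DecidableEq ι] [CommRing R]

lemma exists_transpose_mul_sub_transpose_mul_eq_iff (h2 : IsUnit (2 : R))
    {C A : Matrix ι ι R} (hC : IsUnit C.det) :
    (∃ b : Matrix ι ι R, Cᵀ * (b - bᵀ) * C = A) ↔ Aᵀ = -A := by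
  constructor
  · rintro ⟨b, rfl⟩
    rw [← Matrix.neg_mul, ← Matrix.mul_neg, neg_sub]
    simp only [transpose_mul, transpose_sub, transpose_transpose, Matrix.mul_assoc]
  · intro hA
    obtain ⟨half, hhalf⟩ := h2.exists_left_inv
    let b₀ := C⁻¹ᵀ * A * C⁻¹
    have hb₀ : b₀ᵀ = -b₀ := by
      simp only [b₀, transpose_mul, transpose_transpose, hA, Matrix.mul_assoc, Matrix.neg_mul,
        Matrix.mul_neg]
    have hsub : half • b₀ - (half • b₀)ᵀ = b₀ := by
      rw [transpose_smul, hb₀, smul_neg, sub_neg_eq_add, ← two_smul R, smul_smul, mul_comm, hhalf,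
        one_smul]
    refine ⟨half • b₀, ?_⟩
    rw [hsub, Matrix.mul_assoc, nonsing_inv_mul_cancel_right _ _ hC, ← Matrix.mul_assoc,
      ← transpose_mul, nonsing_inv_mul _ hC, transpose_one, Matrix.one_mul]

lemma nondegenerate_of_forall_eq_mul [IsDomain R] {C S : Matrix ι ι R} {d : ι → R}
    (hC : C.det ≠ 0) (hd : ∀ i, d i ≠ 0) (hS : ∀ i j, S i j = d i * C i j) :
    S.Nondegenerate := by
  obtain rfl : S = of fun i j => d i * C i j := ext hS
  refine nondegenerate_of_det_ne_zero ?_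
  rw [det_mul_column]
  exact mul_ne_zero (Finset.prod_ne_zero_iff.mpr fun i _ => hd i) hC

theorem stmt_1_general [Nontrivial R] (h2 : IsUnit (2 : R)) {Γ : Set ι} {τ : ι → ι}
    {C S : Matrix ι ι R} (hC : IsUnit C.det) (hS : S.IsSymm) (hnd : S.Nondegenerate) :
    (∃ b : Matrix ι ι R, BDEquations Γ τ S (Cᵀ * (b - bᵀ) * C)) ↔
      PreservesOn Γ τ S ∧ NoCycles Γ τ := by
  have htwo : S + Sᵀ = (2 : R) • S := by rw [hS.eq, two_smul]
  have hsep : (S + Sᵀ).SeparatingLeft := htwo ▸ separatingLeft_smul h2 hnd.separatingLeft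
  calc (∃ b : Matrix ι ι R, BDEquations Γ τ S (Cᵀ * (b - bᵀ) * C))
      ↔ ∃ A : Matrix ι ι R, Aᵀ = -A ∧ BDEquations Γ τ S A := by
        simp only [← exists_transpose_mul_sub_transpose_mul_eq_iff h2 hC, exists_exists_eq_and]
    _ ↔ ∃ A : Matrix ι ι R, A + S + (A + S)ᵀ = S + Sᵀ ∧ IsTwistedSkew Γ τ (A + S) := by
        simp only [add_add_transpose_add_eq_iff, bdEquations_iff_isTwistedSkew_add hS]
    _ ↔ ∃ M : Matrix ι ι R, M + Mᵀ = S + Sᵀ ∧ IsTwistedSkew Γ τ M :=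
        (Equiv.addRight S).exists_congr_left.trans (by simp)
    _ ↔ PreservesOn Γ τ S ∧ NoCycles Γ τ := by
        rw [exists_isTwistedSkew_iff hsep, htwo, preservesOn_smul_iff h2]

end SkewMatrix

/-- For `C` invertible and `S i j = d i * C i j` symmetric with `d i > 0`,
there exists a matrix `b` such that `A := Cᵀ (b − bᵀ) C` satisfies the BD equations
if and only if `τ` preserves `S` and `τ` has no cycles. -/
theorem stmt_1 (n : ℕ) (hn : 1 ≤ n)
    (Γ₁ Γ₂ : Set (Fin n)) (τ : Fin n → Fin n) (hτ : Set.BijOn τ Γ₁ Γ₂)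
    (C : Matrix (Fin n) (Fin n) ℝ) (hC : IsUnit C.det)
    (d : Fin n → ℝ) (hd : ∀ i, 0 < d i)
    (S : Matrix (Fin n) (Fin n) ℝ) (hSdef : ∀ i j, S i j = d i * C i j)
    (hSsymm : S.IsSymm) :
    (∃ b : Matrix (Fin n) (Fin n) ℝ,
        ∀ i ∈ Γ₁, ∀ m,
          (Cᵀ * (b - bᵀ) * C) i m + (Cᵀ * (b - bᵀ) * C) m (τ i)
            + S i m + S (τ i) m = 0) ↔
    ((∀ i ∈ Γ₁, ∀ j ∈ Γ₁, S (τ i) (τ j) = S i j) ∧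
     (∀ i ∈ Γ₁, ∀ k : ℕ, 1 ≤ k → (∀ j < k, τ^[j] i ∈ Γ₁) → τ^[k] i ≠ i)) :=
  stmt_1_general (isUnit_iff_ne_zero.mpr two_ne_zero) hC hSsymm
    (nondegenerate_of_forall_eq_mul hC.ne_zero (fun i => (hd i).ne') hSdef)
end

section
/- Suppose S is invertible and there exists a skewsymmetric n×n real matrix A satisfying the BD equations. Then τ has no cycles: for every i ∈ Γ₁ and every k ≥ 1 such that τ^k(i) is defined, one has τ^k(i) ≠ i. -/
/-!
Write `Sᵢ` and `Aᵢ` for the rows of `S` and `A`. As `A` is skewsymmetric, the BD equations say that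
`Sᵢ + S_{τ(i)} = A_{τ(i)} - Aᵢ` for `i ∈ Γ₁`. Summed once around a cycle of `τ`, the right-hand side
telescopes to zero, while the left-hand side counts each row of the cycle twice. Twice the sum of
distinct rows of `S` therefore vanishes, contradicting their linear independence.
-/

section Orbit

open Function Finset

variable {α : Type*} {τ : α → α} {x : α} {n : ℕ}

theorem birkhoffSum_apply_eq_of_isPeriodicPt {G : Type*} [AddCommGroup G]
    (hx : IsPeriodicPt τ n x) (g : α → G) :
    birkhoffSum τ g n (τ x) = birkhoffSum τ g n x := by
  rw [← sub_eq_zero, birkhoffSum_apply_sub_birkhoffSum, hx.eq, sub_self]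

theorem two_nsmul_birkhoffSum_eq_zero_of_add_apply_eq_sub {G : Type*} [AddCommGroup G]
    {s a : α → G} (hx : IsPeriodicPt τ n x)
    (h : ∀ j < n, s (τ^[j] x) + s (τ (τ^[j] x)) = a (τ (τ^[j] x)) - a (τ^[j] x)) :
    2 • birkhoffSum τ s n x = 0 := by
  have shift (g : α → G) : ∑ j ∈ range n, g (τ (τ^[j] x)) = birkhoffSum τ g n x := by
    rw [← birkhoffSum_apply_eq_of_isPeriodicPt hx g]
    simp only [birkhoffSum, ← iterate_succ_apply, iterate_succ_apply']
  calc 2 • birkhoffSum τ s n x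
      = ∑ j ∈ range n, (s (τ^[j] x) + s (τ (τ^[j] x))) := by
        rw [sum_add_distrib, shift, two_nsmul, birkhoffSum]
    _ = ∑ j ∈ range n, (a (τ (τ^[j] x)) - a (τ^[j] x)) :=
        sum_congr rfl fun j hj ↦ h j (mem_range.mp hj)
    _ = 0 := by rw [sum_sub_distrib, shift, birkhoffSum, sub_self]

theorem eq_zero_of_smul_birkhoffSum_minimalPeriod_eq_zero {R M : Type*} [Ring R]
    [AddCommGroup M] [Module R M] {v : α → M} (hv : LinearIndependent R v)
    (hx : x ∈ periodicPts τ) {c : R} (hc : c • birkhoffSum τ v (minimalPeriod τ x) x = 0) :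
    c = 0 := by
  classical
  have distinct : Set.InjOn (τ^[·] x) (range (minimalPeriod τ x)) := by
    simpa only [coe_range] using iterate_injOn_Iio_minimalPeriod
  have x_mem : x ∈ (range (minimalPeriod τ x)).image (τ^[·] x) :=
    mem_image.mpr ⟨0, mem_range.mpr (minimalPeriod_pos_of_mem_periodicPts hx), rfl⟩
  refine linearIndependent_iff'.mp hv _ (fun _ ↦ c) ?_ x x_mem
  rwa [← smul_sum, sum_image distinct]

theorem iterate_ne_self_of_linearIndependent_of_add_apply_eq_sub {R M : Type*} [Ring R]
    [AddCommGroup M] [Module R M] (two_ne : (2 : R) ≠ 0) {s a : α → M}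
    (hs : LinearIndependent R s) (hn : 0 < n)
    (h : ∀ j < n, s (τ^[j] x) + s (τ (τ^[j] x)) = a (τ (τ^[j] x)) - a (τ^[j] x)) :
    τ^[n] x ≠ x := by
  intro (periodic : IsPeriodicPt τ n x)
  have two_sum : 2 • birkhoffSum τ s (minimalPeriod τ x) x = 0 :=
    two_nsmul_birkhoffSum_eq_zero_of_add_apply_eq_sub (isPeriodicPt_minimalPeriod τ x)
      fun j hj ↦ h j (hj.trans_le (periodic.minimalPeriod_le hn))
  refine two_ne (eq_zero_of_smul_birkhoffSum_minimalPeriod_eq_zero hs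
    (mk_mem_periodicPts hn periodic) ?_)
  rwa [ofNat_smul_eq_nsmul]

end Orbit

theorem stmt_2_general {ι R : Type*} [Ring R] (two_ne : (2 : R) ≠ 0)
    {S A : Matrix ι ι R} (hS : LinearIndependent R S.row) (hA : ∀ i j, A i j = -A j i)
    {Γ : Set ι} {τ : ι → ι}
    (hBD : ∀ i ∈ Γ, ∀ m, A i m + A m (τ i) + S i m + S (τ i) m = 0)
    {i : ι} {k : ℕ} (hk : 1 ≤ k) (hΓ : ∀ j < k, τ^[j] i ∈ Γ) :
    τ^[k] i ≠ i := by
  have row_eq : ∀ p ∈ Γ, S.row p + S.row (τ p) = A.row (τ p) - A.row p := by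
    intro p hp
    ext m
    have bd := hBD p hp m
    rw [hA m (τ p), add_assoc] at bd
    simpa [← sub_eq_add_neg] using eq_neg_of_add_eq_zero_right bd
  exact iterate_ne_self_of_linearIndependent_of_add_apply_eq_sub two_ne hS hk
    fun j hj ↦ row_eq _ (hΓ j hj)

/-- If `S` is symmetric and invertible and a skewsymmetric matrix `A`
satisfies the BD equations, then `τ` has no cycles. -/
theorem stmt_2 (n : ℕ) (hn : 1 ≤ n)
    (S : Matrix (Fin n) (Fin n) ℝ) (hSsymm : S.IsSymm) (hSinv : IsUnit S.det)
    (Γ₁ Γ₂ : Set (Fin n)) (τ : Fin n → Fin n) (hτ : Set.BijOn τ Γ₁ Γ₂)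
    (A : Matrix (Fin n) (Fin n) ℝ) (hAskew : ∀ i j, A i j = - A j i)
    (hBD : ∀ i ∈ Γ₁, ∀ m, A i m + A m (τ i) + S i m + S (τ i) m = 0) :
    ∀ i ∈ Γ₁, ∀ k : ℕ, 1 ≤ k → (∀ j < k, τ^[j] i ∈ Γ₁) → τ^[k] i ≠ i :=
  fun _ _ _ hk hΓ ↦ stmt_2_general two_ne_zero
    (Matrix.linearIndependent_rows_of_isUnit ((Matrix.isUnit_iff_isUnit_det S).mpr hSinv))
    hAskew hBD hk hΓ
end

section
/- Suppose a skewsymmetric n×n real matrix A satisfies the BD equations. Then τ preserves S: for all i, m ∈ Γ₁ one has S_{τ(i)τ(m)} = S_{im}. -/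
/-!
Put `B = S + A`. Since `S` is symmetric, the BD equations say `B i m = -B m (τ i)` for `i ∈ Γ₁`
and every `m`. Applying this to `(i, m)` and then to `(m, τ i)` gives `B i m = B (τ i) (τ m)` for
`i, m ∈ Γ₁`. Thus `τ` preserves `B`, hence also `B + Bᵀ = 2S`.
-/

section BelavinDrinfeld

open scoped Matrix

variable {ι G : Type*} {τ : ι → ι} {Γ₁ : Set ι}

/-- The BD equations for `τ : Γ₁ → Γ₂`, written in terms of `B = S + A`, where `S` is the symmetric
and `A` the skew-symmetric matrix. The map `τ` is total, but only its values on `Γ₁` matter. -/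
def SatisfiesBD [Neg G] (τ : ι → ι) (Γ₁ : Set ι) (B : Matrix ι ι G) : Prop :=
  ∀ i ∈ Γ₁, ∀ m, B i m = -B m (τ i)

theorem SatisfiesBD.apply_map_map [InvolutiveNeg G] {B : Matrix ι ι G}
    (hB : SatisfiesBD τ Γ₁ B) {i m : ι} (hi : i ∈ Γ₁) (hm : m ∈ Γ₁) :
    B (τ i) (τ m) = B i m := by
  rw [hB i hi m, hB m hm (τ i), neg_neg]

variable [AddCommGroup G] {S A : Matrix ι ι G}

theorem satisfiesBD_add_iff (hS : S.IsSymm) :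
    SatisfiesBD τ Γ₁ (S + A) ↔
      ∀ i ∈ Γ₁, ∀ m, A i m + A m (τ i) + S i m + S (τ i) m = 0 := by
  refine forall₂_congr fun i _ ↦ forall_congr' fun m ↦ ?_
  rw [eq_neg_iff_add_eq_zero, Matrix.add_apply, Matrix.add_apply, hS.apply (τ i) m]
  have regroup : S i m + A i m + (S (τ i) m + A m (τ i)) =
      A i m + A m (τ i) + S i m + S (τ i) m := by abel
  rw [regroup]

theorem two_nsmul_eq_add_transpose (hS : S.IsSymm) (hA : Aᵀ = -A) :
    2 • S = (S + A) + (S + A)ᵀ := by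
  rw [Matrix.transpose_add, hS.eq, hA, ← sub_eq_add_neg, add_add_sub_cancel, two_nsmul]

theorem stmt_4_general (two_regular : IsSMulRegular G 2) (hS : S.IsSymm) (hA : Aᵀ = -A)
    (hBD : ∀ i ∈ Γ₁, ∀ m, A i m + A m (τ i) + S i m + S (τ i) m = 0) :
    ∀ i ∈ Γ₁, ∀ m ∈ Γ₁, S (τ i) (τ m) = S i m := by
  intro i hi m hm
  have hB : SatisfiesBD τ Γ₁ (S + A) := (satisfiesBD_add_iff hS).2 hBD
  have two_nsmul_apply (j k : ι) : 2 • S j k = (S + A) j k + (S + A) k j :=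
    congr_fun₂ (two_nsmul_eq_add_transpose hS hA) j k
  refine two_regular ?_
  calc
    2 • S (τ i) (τ m) = (S + A) (τ i) (τ m) + (S + A) (τ m) (τ i) := two_nsmul_apply _ _
    _ = (S + A) i m + (S + A) m i := by rw [hB.apply_map_map hi hm, hB.apply_map_map hm hi]
    _ = 2 • S i m := (two_nsmul_apply i m).symm

end BelavinDrinfeld

/-- If a skewsymmetric `A` satisfies the BD equations, then `τ`
preserves `S` on `Γ₁`. -/
theorem stmt_4 (n : ℕ) (hn : 1 ≤ n)
    (S : Matrix (Fin n) (Fin n) ℝ) (hSsymm : S.IsSymm)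
    (Γ₁ Γ₂ : Set (Fin n)) (τ : Fin n → Fin n) (hτ : Set.BijOn τ Γ₁ Γ₂)
    (A : Matrix (Fin n) (Fin n) ℝ) (hAskew : ∀ i j, A i j = - A j i)
    (hBD : ∀ i ∈ Γ₁, ∀ m, A i m + A m (τ i) + S i m + S (τ i) m = 0) :
    ∀ i ∈ Γ₁, ∀ m ∈ Γ₁, S (τ i) (τ m) = S i m :=
  stmt_4_general (nsmul_right_injective two_ne_zero) hSsymm (Matrix.ext fun i j ↦ hAskew j i) hBD
end

section
/- Suppose τ preserves S and τ has no cycles. Then there exists a skewsymmetric n×n real matrix A satisfying the BD equations. -/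
/-!
Put `s i m = S i m + S (τ i) m`. For a skewsymmetric `A` the BD equations read
`A (τ i) m - A i m = s i m`: they prescribe the difference of `A` along `τ` in the first argument,
hence, by skewness, also in the second. The two prescriptions are compatible exactly when
`s i (τ m) + s m (τ i) = s i m + s m i`, and this follows from `S` being symmetric and preserved
by `τ`. When no orbit of `τ` can be continued forever, `s` is integrated along orbits: if `r i` is
the point where the orbit of `i` leaves `Γ` and `F i` is minus the sum of `s` along that orbit,
then `A i m = F i m - F m (r i)` is the desired matrix.
-/

/-- Compatibility of the equations `A (τ i) m - A i m = s i m`, for `i ∈ Γ`, with skewsymmetry of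
`A`, which makes `s i (τ m) - s i m` and `s m (τ i) - s m i` opposite mixed differences of `A`.
The condition is written without subtraction. -/
def IsCompatible {ι G : Type*} [Add G] (Γ : Set ι) (τ : ι → ι) (s : ι → ι → G) : Prop :=
  ∀ i ∈ Γ, ∀ m ∈ Γ, s i (τ m) + s m (τ i) = s i m + s m i

/-- The transition relation of the partial map `τ` with domain `Γ`, with the image as first
argument, so that it is well-founded when every orbit leaves `Γ` after finitely many steps. -/
def PartialStep {ι : Type*} (Γ : Set ι) (τ : ι → ι) (j i : ι) : Prop :=
  i ∈ Γ ∧ τ i = j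

namespace PartialStep

variable {ι : Type*} {Γ : Set ι} {τ : ι → ι}

theorem wellFounded_of_no_cycles [Finite ι]
    (no_cycles : ∀ i ∈ Γ, ∀ k : ℕ, 1 ≤ k → (∀ j < k, τ^[j] i ∈ Γ) → τ^[k] i ≠ i) :
    WellFounded (PartialStep Γ τ) := by
  refine wellFounded_iff_isEmpty_descending_chain.mpr ⟨fun ⟨x, hx⟩ => ?_⟩
  have iterate_eq (a j : ℕ) : τ^[j] (x a) = x (a + j) := by
    induction j with
    | zero => rfl
    | succ j ih => rw [Function.iterate_succ_apply', ih, (hx (a + j)).2, Nat.add_assoc]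
  obtain ⟨a, b, hab, x_eq⟩ : ∃ a b, a < b ∧ x a = x b := by
    obtain ⟨a, b, hne, x_eq⟩ := Finite.exists_ne_map_eq_of_infinite x
    exact hne.lt_or_gt.elim (⟨a, b, ·, x_eq⟩) (⟨b, a, ·, x_eq.symm⟩)
  refine no_cycles (x a) (hx a).1 (b - a) (by lia) (fun j _ => ?_) ?_
  · exact iterate_eq a j ▸ (hx (a + j)).1
  · rw [iterate_eq, Nat.add_sub_cancel' hab.le, x_eq]

open Classical in
/-- The function defined by recursion along the orbits of `τ`: its value at a point of `Γ` is
obtained by `step` from its value at the image, and it is `base` off `Γ`. -/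
noncomputable def orbitRec {X : Type*} (wf : WellFounded (PartialStep Γ τ))
    (base : ι → X) (step : ι → X → X) : ι → X :=
  wf.fix fun i rec => if hi : i ∈ Γ then step i (rec (τ i) ⟨hi, rfl⟩) else base i

theorem orbitRec_of_mem {X : Type*} (wf : WellFounded (PartialStep Γ τ))
    (base : ι → X) (step : ι → X → X) {i : ι} (hi : i ∈ Γ) :
    orbitRec wf base step i = step i (orbitRec wf base step (τ i)) :=
  (wf.fix_eq _ i).trans (dif_pos hi)

theorem orbitRec_of_notMem {X : Type*} (wf : WellFounded (PartialStep Γ τ))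
    (base : ι → X) (step : ι → X → X) {i : ι} (hi : i ∉ Γ) :
    orbitRec wf base step i = base i :=
  (wf.fix_eq _ i).trans (dif_neg hi)

/-- The first point outside `Γ` on the orbit of a given point. -/
noncomputable def exitPoint (wf : WellFounded (PartialStep Γ τ)) : ι → ι :=
  orbitRec wf id fun _ x => x

theorem exitPoint_of_mem (wf : WellFounded (PartialStep Γ τ)) {i : ι} (hi : i ∈ Γ) :
    exitPoint wf i = exitPoint wf (τ i) :=
  orbitRec_of_mem wf _ _ hi

theorem exitPoint_of_notMem (wf : WellFounded (PartialStep Γ τ)) {i : ι} (hi : i ∉ Γ) :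
    exitPoint wf i = i :=
  orbitRec_of_notMem wf _ _ hi

variable {G : Type*} [AddCommGroup G]

/-- Minus the sum of `s` over the points of `Γ` on the orbit of a given point. The sign makes
`s i` the increment of the potential from `i` to `τ i`. -/
noncomputable def potential (wf : WellFounded (PartialStep Γ τ)) (s : ι → G) : ι → G :=
  orbitRec wf (fun _ => 0) fun i x => x - s i

theorem potential_of_mem (wf : WellFounded (PartialStep Γ τ)) (s : ι → G) {i : ι} (hi : i ∈ Γ) :
    potential wf s i = potential wf s (τ i) - s i :=
  orbitRec_of_mem wf _ _ hi

theorem potential_of_notMem (wf : WellFounded (PartialStep Γ τ)) (s : ι → G) {i : ι}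
    (hi : i ∉ Γ) : potential wf s i = 0 :=
  orbitRec_of_notMem wf _ _ hi

theorem potential_apply_sub_potential_apply (wf : WellFounded (PartialStep Γ τ)) {s : ι → ι → G}
    (hs : IsCompatible Γ τ s) {i : ι} (hi : i ∈ Γ) (m : ι) :
    potential wf s m (τ i) - potential wf s m i = s i (exitPoint wf m) - s i m := by
  induction m using wf.induction with
  | _ m ih =>
    by_cases hm : m ∈ Γ
    · calc
        potential wf s m (τ i) - potential wf s m i
        _ = potential wf s (τ m) (τ i) - potential wf s (τ m) i - (s m (τ i) - s m i) := by
          simp only [potential_of_mem wf s hm, Pi.sub_apply]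
          abel
        _ = s i (exitPoint wf m) - s i (τ m) - (s m (τ i) - s m i) := by
          rw [ih (τ m) ⟨hm, rfl⟩, exitPoint_of_mem wf hm]
        _ = s i (exitPoint wf m) - s i m := by
          grind [hs i hi m hm]
    · simp only [potential_of_notMem wf s hm, exitPoint_of_notMem wf hm, Pi.zero_apply, sub_self]

theorem potential_apply_add_potential_apply (wf : WellFounded (PartialStep Γ τ)) {s : ι → ι → G}
    (hs : IsCompatible Γ τ s) (i m : ι) :
    potential wf s i m + potential wf s m i =
      potential wf s i (exitPoint wf m) + potential wf s m (exitPoint wf i) := by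
  induction i using wf.induction with
  | _ i ih =>
    by_cases hi : i ∈ Γ
    · calc
        potential wf s i m + potential wf s m i
        _ = potential wf s (τ i) m + potential wf s m (τ i)
              - (s i m + (potential wf s m (τ i) - potential wf s m i)) := by
          simp only [potential_of_mem wf s hi, Pi.sub_apply]
          abel
        _ = potential wf s (τ i) (exitPoint wf m) + potential wf s m (exitPoint wf i)
              - s i (exitPoint wf m) := by
          rw [ih (τ i) ⟨hi, rfl⟩, potential_apply_sub_potential_apply wf hs hi,
            exitPoint_of_mem wf hi, add_sub_cancel]
        _ = potential wf s i (exitPoint wf m) + potential wf s m (exitPoint wf i) := by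
          simp only [potential_of_mem wf s hi, Pi.sub_apply]
          abel
    · simp only [potential_of_notMem wf s hi, exitPoint_of_notMem wf hi, Pi.zero_apply]

theorem exists_skew_of_isCompatible (wf : WellFounded (PartialStep Γ τ)) {s : ι → ι → G}
    (hs : IsCompatible Γ τ s) :
    ∃ A : ι → ι → G, (∀ i j, A i j = -A j i) ∧ ∀ i ∈ Γ, ∀ m, A (τ i) m - A i m = s i m := by
  refine ⟨fun i m => potential wf s i m - potential wf s m (exitPoint wf i),
    fun i m => ?_, fun i hi m => ?_⟩
  · grind [potential_apply_add_potential_apply wf hs i m]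
  · simp only [potential_of_mem wf s hi, exitPoint_of_mem wf hi, Pi.sub_apply]
    abel

end PartialStep

theorem isCompatible_of_isSymm_of_preserves {ι G : Type*} [AddCommMonoid G] {S : Matrix ι ι G}
    (hS : S.IsSymm) {Γ : Set ι} {τ : ι → ι}
    (hpres : ∀ i ∈ Γ, ∀ j ∈ Γ, S (τ i) (τ j) = S i j) :
    IsCompatible Γ τ fun i m => S i m + S (τ i) m := by
  intro i hi m hm
  dsimp only
  rw [hpres i hi m hm, hpres m hm i hi, hS.apply (τ m) i, hS.apply m (τ i)]
  abel

theorem stmt_6_general {ι G : Type*} [AddCommGroup G] (S : Matrix ι ι G) (hSsymm : S.IsSymm)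
    (Γ : Set ι) (τ : ι → ι) (hwf : WellFounded (PartialStep Γ τ))
    (hpres : ∀ i ∈ Γ, ∀ j ∈ Γ, S (τ i) (τ j) = S i j) :
    ∃ A : Matrix ι ι G,
      (∀ i j, A i j = -A j i) ∧
      (∀ i ∈ Γ, ∀ m, A i m + A m (τ i) + S i m + S (τ i) m = 0) := by
  obtain ⟨A, skew, difference⟩ :=
    PartialStep.exists_skew_of_isCompatible hwf
      (isCompatible_of_isSymm_of_preserves hSsymm hpres)
  refine ⟨A, skew, fun i hi m => ?_⟩
  rw [skew m (τ i), add_assoc, ← difference i hi m]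
  abel

/-- If `τ` preserves the symmetric matrix `S` and has no cycles,
then there exists a skewsymmetric matrix `A` satisfying the BD equations. -/
theorem stmt_6 (n : ℕ) (hn : 1 ≤ n)
    (S : Matrix (Fin n) (Fin n) ℝ) (hSsymm : S.IsSymm)
    (Γ₁ Γ₂ : Set (Fin n)) (τ : Fin n → Fin n) (hτ : Set.BijOn τ Γ₁ Γ₂)
    (hpres : ∀ i ∈ Γ₁, ∀ j ∈ Γ₁, S (τ i) (τ j) = S i j)
    (hnc : ∀ i ∈ Γ₁, ∀ k : ℕ, 1 ≤ k → (∀ j < k, τ^[j] i ∈ Γ₁) → τ^[k] i ≠ i) :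
    ∃ A : Matrix (Fin n) (Fin n) ℝ,
      (∀ i j, A i j = - A j i) ∧
      (∀ i ∈ Γ₁, ∀ m, A i m + A m (τ i) + S i m + S (τ i) m = 0) :=
  stmt_6_general S hSsymm Γ₁ τ (PartialStep.wellFounded_of_no_cycles hnc) hpres
end

section
/- Let x and y be nilpotent elements of R satisfying x·y = q·(y·x). Then x + y is nilpotent and exp_q(y)·exp_q(x) = exp_q(x+y). -/
/-- The `q`-factorial `k_q! = 1_q · 2_q ⋯ k_q`, where
`k_q = (q^k − 1)/(q − 1) = 1 + q + ⋯ + q^{k−1}` (and `0_q! = 1`). -/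
def qFactorial {K : Type*} [Field K] (q : K) : ℕ → K
  | 0 => 1
  | k + 1 => qFactorial q k * (∑ j ∈ Finset.range (k + 1), q ^ j)

/-- The `q`-exponential of a nilpotent element `u`:
`exp_q(u) = ∑_{k ≥ 0} u^k / k_q!`, a finite sum since `u` is nilpotent
(all terms with `k ≥ nilpotencyClass u` vanish). -/
noncomputable def qExp {K : Type*} [Field K] {R : Type*} [Ring R] [Algebra K R]
    (q : K) (u : R) : R :=
  ∑ k ∈ Finset.range (nilpotencyClass u), (qFactorial q k)⁻¹ • u ^ k

/-! Moving `x` past `y ^ i` multiplies by `q ^ i`, so `(x + y) ^ n` expands into the monomials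
`y ^ i * x ^ j` with `i + j = n`, the coefficients being the Gaussian binomials. If `x ^ a = 0` and
`y ^ b = 0`, all these monomials vanish once `a + b ≤ n + 1`, so `x + y` is nilpotent. Since the
Gaussian binomial is `n_q! / (i_q! * j_q!)`, dividing by `n_q!` turns the expansion into the degree
`n` part of the product of the two exponentials. -/

open Finset

lemma sum_range_product_range_eq_sum_antidiagonal {M : Type*} [AddCommMonoid M] {f : ℕ × ℕ → M}
    {a b N : ℕ} (hN : a + b ≤ N + 1) (hf : ∀ p : ℕ × ℕ, a ≤ p.1 ∨ b ≤ p.2 → f p = 0) :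
    ∑ p ∈ range a ×ˢ range b, f p = ∑ n ∈ range N, ∑ p ∈ antidiagonal n, f p := by
  have add_mem_range : ∀ p ∈ range a ×ˢ range b, p.1 + p.2 ∈ range N := by
    simp only [mem_product, mem_range]
    omega
  rw [← sum_fiberwise_of_maps_to add_mem_range]
  refine sum_congr rfl fun n _ ↦ sum_subset (fun p hp ↦ ?_) fun p hp hp' ↦ hf p ?_
  · exact HasAntidiagonal.mem_antidiagonal.mpr (mem_filter.mp hp).2
  · simp only [mem_filter, mem_product, mem_range, HasAntidiagonal.mem_antidiagonal] at hp hp'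
    omega

section GaussianBinomial

variable {S : Type*} [CommSemiring S] (q : S)

/-- The Gaussian binomial coefficient `[n choose k]_q`, as a polynomial expression in `q`. Defining
it by the `q`-Pascal rule instead of a quotient of `q`-factorials makes it available when some of
these vanish. As for `Nat.choose`, it is `0` for `n < k`. -/
def gaussBinom : ℕ → ℕ → S
  | _, 0 => 1
  | 0, _ + 1 => 0
  | n + 1, k + 1 => gaussBinom n k + q ^ (k + 1) * gaussBinom n (k + 1)

@[simp]
lemma gaussBinom_zero_right (n : ℕ) : gaussBinom q n 0 = 1 := by
  cases n <;> rfl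

lemma gaussBinom_succ_succ (n k : ℕ) :
    gaussBinom q (n + 1) (k + 1) = gaussBinom q n k + q ^ (k + 1) * gaussBinom q n (k + 1) :=
  rfl

lemma gaussBinom_eq_zero_of_lt {n k : ℕ} (h : n < k) : gaussBinom q n k = 0 := by
  induction n generalizing k with
  | zero => obtain ⟨k, rfl⟩ := Nat.exists_eq_succ_of_ne_zero h.ne'; rfl
  | succ n ih =>
    obtain ⟨k, rfl⟩ := Nat.exists_eq_succ_of_ne_zero (Nat.ne_zero_of_lt h)
    rw [gaussBinom_succ_succ, ih (by omega), ih (by omega), mul_zero, add_zero]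

@[simp]
lemma gaussBinom_self (n : ℕ) : gaussBinom q n n = 1 := by
  induction n with
  | zero => rfl
  | succ n ih =>
    rw [gaussBinom_succ_succ, ih, gaussBinom_eq_zero_of_lt q n.lt_succ_self, mul_zero, add_zero]

end GaussianBinomial

section QCommuting

variable {S A : Type*} [CommSemiring S] [Semiring A] [Algebra S A] {q : S} {x y : A}

lemma mul_pow_of_mul_eq_smul (hxy : x * y = q • (y * x)) (n : ℕ) :
    x * y ^ n = q ^ n • (y ^ n * x) := by
  induction n with
  | zero => simp
  | succ n ih =>
    rw [pow_succ, ← mul_assoc, ih, smul_mul_assoc, mul_assoc, hxy, mul_smul_comm, smul_smul,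
      ← pow_succ, ← mul_assoc]

lemma add_pow_eq_sum_gaussBinom (hxy : x * y = q • (y * x)) (n : ℕ) :
    (x + y) ^ n = ∑ p ∈ antidiagonal n, gaussBinom q n p.1 • (y ^ p.1 * x ^ p.2) := by
  induction n with
  | zero => simp
  | succ n ih =>
    have mul_left_x : x * (x + y) ^ n =
        ∑ p ∈ antidiagonal (n + 1), (q ^ p.1 * gaussBinom q n p.1) • (y ^ p.1 * x ^ p.2) := by
      rw [Nat.sum_antidiagonal_succ', gaussBinom_eq_zero_of_lt q n.lt_succ_self, mul_zero,
        zero_smul, zero_add, ih, mul_sum]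
      refine sum_congr rfl fun p _ ↦ ?_
      rw [mul_smul_comm, ← mul_assoc, mul_pow_of_mul_eq_smul hxy, smul_mul_assoc, smul_smul,
        mul_assoc, ← pow_succ', mul_comm]
    have mul_left_y : y * (x + y) ^ n =
        ∑ p ∈ antidiagonal n, gaussBinom q n p.1 • (y ^ (p.1 + 1) * x ^ p.2) := by
      simp only [ih, mul_sum, mul_smul_comm, pow_succ', mul_assoc]
    rw [pow_succ', add_mul, mul_left_x, mul_left_y, Nat.sum_antidiagonal_succ,
      Nat.sum_antidiagonal_succ, add_assoc, ← sum_add_distrib]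
    simp only [gaussBinom_succ_succ, gaussBinom_zero_right, pow_zero, mul_one, add_smul, add_comm]

lemma add_pow_eq_zero_of_mul_eq_smul {a b n : ℕ} (hxy : x * y = q • (y * x))
    (hx : x ^ a = 0) (hy : y ^ b = 0) (hn : a + b ≤ n + 1) : (x + y) ^ n = 0 := by
  rw [add_pow_eq_sum_gaussBinom hxy]
  refine sum_eq_zero fun p hp ↦ ?_
  have hp : p.1 + p.2 = n := HasAntidiagonal.mem_antidiagonal.mp hp
  obtain h | h : a ≤ p.2 ∨ b ≤ p.1 := by omega
  · rw [pow_eq_zero_of_le h hx, mul_zero, smul_zero]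
  · rw [pow_eq_zero_of_le h hy, zero_mul, smul_zero]

end QCommuting

section QFactorial

variable {K : Type*} [Field K] {q : K}

lemma qFactorial_succ (q : K) (n : ℕ) :
    qFactorial q (n + 1) = qFactorial q n * ∑ j ∈ range (n + 1), q ^ j :=
  rfl

lemma qFactorial_ne_zero {n : ℕ} (hq : ∀ k, 1 ≤ k → k ≤ n → q ^ k ≠ 1) : qFactorial q n ≠ 0 := by
  induction n with
  | zero => exact one_ne_zero
  | succ n ih =>
    have geom_sum_mul_ne_zero : (∑ j ∈ range (n + 1), q ^ j) * (q - 1) ≠ 0 := by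
      rw [geom_sum_mul]
      exact sub_ne_zero.mpr (hq (n + 1) n.succ_pos le_rfl)
    exact mul_ne_zero (ih fun k hk hkn ↦ hq k hk (hkn.trans n.le_succ))
      (left_ne_zero_of_mul geom_sum_mul_ne_zero)

lemma gaussBinom_mul_qFactorial_mul_qFactorial (q : K) (i j : ℕ) :
    gaussBinom q (i + j) i * (qFactorial q i * qFactorial q j) = qFactorial q (i + j) := by
  induction i generalizing j with
  | zero => simp [qFactorial]
  | succ i ihi =>
    induction j with
    | zero => simp [qFactorial]
    | succ j ihj =>
      have geom_sum_split : ∑ k ∈ range (i + 1 + j + 1), q ^ k =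
          ∑ k ∈ range (i + 1), q ^ k + q ^ (i + 1) * ∑ k ∈ range (j + 1), q ^ k := by
        rw [add_assoc (i + 1) j 1, sum_range_add, mul_sum]
        simp only [pow_add q (i + 1)]
      have ihi' : gaussBinom q (i + 1 + j) i * (qFactorial q i * qFactorial q (j + 1)) =
          qFactorial q (i + 1 + j) := by
        rw [add_right_comm, add_assoc, ihi]
      rw [← add_assoc, gaussBinom_succ_succ, qFactorial_succ q (i + 1 + j), geom_sum_split, mul_add]
      nth_rw 1 [← ihi']
      rw [← ihj, qFactorial_succ q i, qFactorial_succ q j]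
      ring

end QFactorial

section QExp

variable {K R : Type*} [Field K] [Ring R] [Algebra K R] {q : K} {x y : R}

lemma inv_qFactorial_smul_add_pow {n : ℕ} (hn : qFactorial q n ≠ 0) (hxy : x * y = q • (y * x)) :
    (qFactorial q n)⁻¹ • (x + y) ^ n = ∑ p ∈ antidiagonal n,
      ((qFactorial q p.1)⁻¹ • y ^ p.1) * ((qFactorial q p.2)⁻¹ • x ^ p.2) := by
  rw [add_pow_eq_sum_gaussBinom hxy, smul_sum]
  refine sum_congr rfl fun ⟨i, j⟩ hij ↦ ?_
  obtain rfl : i + j = n := HasAntidiagonal.mem_antidiagonal.mp hij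
  have binom_mul := gaussBinom_mul_qFactorial_mul_qFactorial q i j
  have factorials_ne_zero : qFactorial q i * qFactorial q j ≠ 0 :=
    right_ne_zero_of_mul (binom_mul ▸ hn)
  have coeff_eq : (qFactorial q (i + j))⁻¹ * gaussBinom q (i + j) i =
      (qFactorial q i)⁻¹ * (qFactorial q j)⁻¹ := by
    rw [← mul_inv, inv_mul_eq_iff_eq_mul₀ hn, eq_mul_inv_iff_mul_eq₀ factorials_ne_zero, binom_mul]
  rw [smul_smul, coeff_eq, smul_mul_smul_comm]

lemma qExp_eq_sum_range (q : K) {n : ℕ} (hx : x ^ n = 0) :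
    qExp q x = ∑ k ∈ range n, (qFactorial q k)⁻¹ • x ^ k := by
  refine sum_subset (range_mono (Nat.sInf_le hx)) fun k _ hk ↦ ?_
  have class_le : nilpotencyClass x ≤ k := by simpa using hk
  rw [pow_eq_zero_of_le class_le (pow_nilpotencyClass ⟨n, hx⟩), smul_zero]

lemma qExp_mul_qExp_of_mul_eq_smul {a b : ℕ} (hx : x ^ a = 0) (hy : y ^ b = 0)
    (hxy : x * y = q • (y * x)) (hq : ∀ n, n + 1 < a + b → qFactorial q n ≠ 0) :
    qExp q y * qExp q x = qExp q (x + y) := by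
  have add_pow_eq_zero : (x + y) ^ (a + b - 1) = 0 :=
    add_pow_eq_zero_of_mul_eq_smul hxy hx hy (by omega)
  rw [qExp_eq_sum_range q hx, qExp_eq_sum_range q hy, qExp_eq_sum_range q add_pow_eq_zero,
    sum_mul_sum, ← sum_product',
    sum_range_product_range_eq_sum_antidiagonal (N := a + b - 1) (by omega)]
  · refine sum_congr rfl fun n hn ↦ (inv_qFactorial_smul_add_pow (hq n ?_) hxy).symm
    have := mem_range.mp hn
    omega
  · rintro p (h | h)
    · rw [pow_eq_zero_of_le h hy, smul_zero, zero_mul]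
    · rw [pow_eq_zero_of_le h hx, smul_zero, mul_zero]

end QExp

theorem stmt_10_general {K : Type*} [Field K] {q : K} {R : Type*} [Ring R] [Algebra K R] {x y : R}
    (hx : IsNilpotent x) (hy : IsNilpotent y) (hxy : x * y = q • (y * x))
    (hq : ∀ n, n + 1 < nilpotencyClass x + nilpotencyClass y → qFactorial q n ≠ 0) :
    IsNilpotent (x + y) ∧ qExp q y * qExp q x = qExp q (x + y) := by
  have pow_x := pow_nilpotencyClass hx
  have pow_y := pow_nilpotencyClass hy
  exact ⟨⟨_, add_pow_eq_zero_of_mul_eq_smul hxy pow_x pow_y (Nat.le_succ _)⟩,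
    qExp_mul_qExp_of_mul_eq_smul pow_x pow_y hxy hq⟩

/-- If `x` and `y` are nilpotent and `x y = q (y x)`, then `x + y`
is nilpotent and `exp_q(y) exp_q(x) = exp_q(x + y)`. -/
theorem stmt_10 {K : Type*} [Field K] [CharZero K]
    (q : K) (hq : ∀ k : ℕ, 1 ≤ k → q ^ k ≠ 1)
    {R : Type*} [Ring R] [Algebra K R]
    (x y : R) (hx : IsNilpotent x) (hy : IsNilpotent y)
    (hxy : x * y = q • (y * x)) :
    IsNilpotent (x + y) ∧ qExp q y * qExp q x = qExp q (x + y) :=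
  stmt_10_general hx hy hxy fun _ _ ↦ qFactorial_ne_zero fun k hk _ ↦ hq k hk
end
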